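/- arXiv:0804.3682 — 4 statements merged into one kernel-verified Lean document; each statement's English description precedes it below -/
import Mathlib

section
/- Let m ≥ 3 be an odd integer, let a ∈ {0,1,…,m−1}, and let j ∈ {0,1}. Then for every ε > 0 one has T^{(j)}_{m,a}(x) = x/(2m) + O(x^{α(m)+ε}) as x → ∞, where α(m) = max_{1 ≤ l ≤ m−1} ( 1 + (1/(h·ln 2)) · Σ_{k=0}^{h−1} ln |sin(π l 2^k / m)| ) and h is the multiplicative order of 2 modulo m. (Upper-bound half of Theorem 1.) -/
/-!
Writing `1_{s(n) ≡ j} = (1 + (-1)^{j + s(n)}) / 2`, the error term is half a signed sum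
`∑ (-1)^{s(n)}` over a residue class, up to `O(1)`. Fourier inversion on `ℤ/m` turns the signed sum
into an average of the sums `F_z(x) = ∑_{n < x} (-1)^{s(n)} z^n` over the `m`-th roots of unity `z`.

Splitting off the last binary digit gives `F_z(2x) = (1 - z) F_{z²}(x)`, hence
`|F_z(x)| ≤ ∑_{i < N} ∏_{k < i} |1 - z^{2^k}|` for `x < 2^N`. As `z^{2^h} = z`, these products are
multiplicative over blocks of length `h`, and since `|1 - e^{2πit}| = 2 |sin πt|` a full block is at
most `2^{αh}` by the definition of `α`. If `α > 0`, the resulting geometric series is `O(x^α)`.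

That `α > 0`, so that no `ε` is lost, comes from `∏_{l=1}^{m-1} (1 - ω^l) = m` for a primitive
`m`-th root of unity `ω`: the product of all full blocks is `m^h > 1`, so one of them exceeds `1`.
-/

/-- `s n` is the number of 1's in the binary expansion of `n`. -/
def s (n : ℕ) : ℕ := (Nat.digits 2 n).sum

/-- `T m a j x` counts natural numbers `n < x` with `n ≡ a (mod m)` and `s n ≡ j (mod 2)`. -/
def T (m a j x : ℕ) : ℕ :=
  ((Finset.range x).filter (fun n => n % m = a ∧ s n % 2 = j)).card

open Finset Filter Asymptotics

lemma s_two_mul (n : ℕ) : s (2 * n) = s n := by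
  rcases n.eq_zero_or_pos with rfl | hn
  · rfl
  · simp [s, Nat.digits_base_mul one_lt_two hn]

lemma s_two_mul_add_one (n : ℕ) : s (2 * n + 1) = s n + 1 := by
  rw [s, add_comm, Nat.digits_add 2 one_lt_two 1 n one_lt_two (.inl one_ne_zero), List.sum_cons,
    add_comm, s]

/-- The exponential sum `∑_{n < x} (-1)^{s(n)} z^n` of the Thue–Morse sequence, over any
commutative ring; its values at the `m`-th roots of unity control the counts `T m a j`. -/
def thueMorseSum {R : Type*} [CommRing R] (z : R) (x : ℕ) : R :=
  ∑ n ∈ range x, (-1) ^ s n * z ^ n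

/-- The Riesz-type product `∏_{k < i} ‖1 - z^{2^k}‖`, which in a normed field is the norm of
`thueMorseSum z (2 ^ i)`. It measures the growth of `thueMorseSum z` along the orbit of `z` under
squaring. -/
def rieszProd {R : Type*} [SeminormedCommRing R] (z : R) (i : ℕ) : ℝ :=
  ∏ k ∈ range i, ‖1 - z ^ 2 ^ k‖

lemma thueMorseSum_succ {R : Type*} [CommRing R] (z : R) (x : ℕ) :
    thueMorseSum z (x + 1) = thueMorseSum z x + (-1) ^ s x * z ^ x :=
  sum_range_succ _ _

lemma thueMorseSum_two_mul {R : Type*} [CommRing R] (z : R) (x : ℕ) :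
    thueMorseSum z (2 * x) = (1 - z) * thueMorseSum (z ^ 2) x := by
  induction x with
  | zero => simp [thueMorseSum]
  | succ x ih =>
    rw [mul_add_one, thueMorseSum_succ, thueMorseSum_succ, thueMorseSum_succ, ih, s_two_mul,
      s_two_mul_add_one]
    ring

section SeminormedCommRing

variable {R : Type*} [SeminormedCommRing R] {z : R} {h : ℕ}

lemma rieszProd_nonneg (z : R) (i : ℕ) : 0 ≤ rieszProd z i :=
  prod_nonneg fun _ _ ↦ norm_nonneg _

lemma rieszProd_succ (z : R) (i : ℕ) : rieszProd z (i + 1) = ‖1 - z‖ * rieszProd (z ^ 2) i := by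
  simp only [rieszProd, prod_range_succ', pow_zero, pow_one, ← pow_mul, pow_succ' 2, mul_comm]

lemma rieszProd_add (hz : z ^ 2 ^ h = z) (i : ℕ) :
    rieszProd z (h + i) = rieszProd z h * rieszProd z i := by
  simp only [rieszProd, prod_range_add, pow_add, pow_mul, hz]

variable [NormOneClass R]

lemma rieszProd_le_two_pow (hz : ‖z‖ ≤ 1) (i : ℕ) : rieszProd z i ≤ 2 ^ i := by
  have factor_le (k : ℕ) : ‖1 - z ^ 2 ^ k‖ ≤ 2 :=
    calc ‖1 - z ^ 2 ^ k‖ ≤ ‖(1 : R)‖ + ‖z‖ ^ 2 ^ k :=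
          (norm_sub_le _ _).trans (by gcongr; exact norm_pow_le _ _)
      _ ≤ 2 := by rw [norm_one]; linarith [pow_le_one₀ (norm_nonneg z) hz (n := 2 ^ k)]
  simpa [rieszProd] using
    prod_le_prod (s := range i) (fun _ _ ↦ norm_nonneg _) fun k _ ↦ factor_le k

lemma rieszProd_le_mul_pow (hh : h ≠ 0) (hz : ‖z‖ ≤ 1) (hper : z ^ 2 ^ h = z) {r : ℝ} (hr : 1 ≤ r)
    (hblock : rieszProd z h ≤ r ^ h) (i : ℕ) : rieszProd z i ≤ 2 ^ h * r ^ i := by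
  induction i using Nat.strong_induction_on with
  | _ i ih =>
    rcases lt_or_ge i h with hi | hi
    · calc rieszProd z i ≤ 2 ^ i := rieszProd_le_two_pow hz i
        _ ≤ 2 ^ h := pow_le_pow_right₀ one_le_two hi.le
        _ ≤ 2 ^ h * r ^ i := le_mul_of_one_le_right (by positivity) (one_le_pow₀ hr)
    · obtain ⟨i, rfl⟩ := Nat.exists_eq_add_of_le hi
      calc rieszProd z (h + i) = rieszProd z h * rieszProd z i := rieszProd_add hper i
        _ ≤ r ^ h * (2 ^ h * r ^ i) :=
          mul_le_mul hblock (ih i (by omega)) (rieszProd_nonneg _ _) (by positivity)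
        _ = 2 ^ h * r ^ (h + i) := by ring

lemma norm_thueMorseSum_le_half (hz : ‖z‖ ≤ 1) (x : ℕ) :
    ‖thueMorseSum z x‖ ≤ ‖1 - z‖ * ‖thueMorseSum (z ^ 2) (x / 2)‖ + 1 := by
  have even_part : ‖thueMorseSum z (2 * (x / 2))‖ ≤ ‖1 - z‖ * ‖thueMorseSum (z ^ 2) (x / 2)‖ := by
    rw [thueMorseSum_two_mul]
    exact norm_mul_le _ _
  have term_le (n : ℕ) : ‖(-1) ^ s n * z ^ n‖ ≤ 1 := by
    rcases neg_one_pow_eq_or R (s n) with hs | hs <;>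
      simpa [hs] using (norm_pow_le z n).trans (pow_le_one₀ (norm_nonneg z) hz)
  rcases Nat.mod_two_eq_zero_or_one x with hx | hx
  · rw [show 2 * (x / 2) = x by omega] at even_part
    linarith
  · calc ‖thueMorseSum z x‖
        = ‖thueMorseSum z (2 * (x / 2)) + (-1) ^ s (2 * (x / 2)) * z ^ (2 * (x / 2))‖ := by
          rw [← thueMorseSum_succ, show 2 * (x / 2) + 1 = x by omega]
      _ ≤ _ := (norm_add_le _ _).trans (add_le_add even_part (term_le _))

lemma norm_thueMorseSum_le_sum_rieszProd (hz : ‖z‖ ≤ 1) {N x : ℕ} (hx : x < 2 ^ N) :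
    ‖thueMorseSum z x‖ ≤ ∑ i ∈ range N, rieszProd z i := by
  induction N generalizing z x with
  | zero => simp [thueMorseSum, show x = 0 by simpa using hx]
  | succ N ih =>
    have hz2 : ‖z ^ 2‖ ≤ 1 := (norm_pow_le z 2).trans (pow_le_one₀ (norm_nonneg z) hz)
    calc ‖thueMorseSum z x‖ ≤ ‖1 - z‖ * ‖thueMorseSum (z ^ 2) (x / 2)‖ + 1 :=
          norm_thueMorseSum_le_half hz x
      _ ≤ ‖1 - z‖ * ∑ i ∈ range N, rieszProd (z ^ 2) i + 1 := by
          gcongr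
          exact ih hz2 (by omega)
      _ = ∑ i ∈ range (N + 1), rieszProd z i := by
          simp only [sum_range_succ' _ N, rieszProd_succ, mul_sum]
          simp [rieszProd]

lemma thueMorseSum_isBigO_rpow (hh : h ≠ 0) (hz : ‖z‖ ≤ 1) (hper : z ^ 2 ^ h = z) {β : ℝ}
    (hβ : 0 < β) (hblock : rieszProd z h ≤ 2 ^ (β * h)) :
    thueMorseSum z =O[atTop] fun x : ℕ ↦ (x : ℝ) ^ β := by
  set r : ℝ := 2 ^ β with hr
  have hr1 : 1 < r := Real.one_lt_rpow one_lt_two hβ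
  have : 0 < r - 1 := sub_pos.2 hr1
  have hblock' : rieszProd z h ≤ r ^ h := by rwa [hr, ← Real.rpow_mul_natCast zero_le_two]
  refine .of_bound (2 ^ h * (r / (r - 1))) ?_
  filter_upwards [eventually_ne_atTop 0] with x hx
  set L := Nat.log 2 x
  have pow_log_le : r ^ L ≤ (x : ℝ) ^ β := by
    rw [hr, Real.rpow_pow_comm zero_le_two]
    gcongr
    exact_mod_cast Nat.pow_log_le_self 2 hx
  calc ‖thueMorseSum z x‖ ≤ ∑ i ∈ range (L + 1), rieszProd z i :=
        norm_thueMorseSum_le_sum_rieszProd hz (Nat.lt_pow_succ_log_self one_lt_two x)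
    _ ≤ ∑ i ∈ range (L + 1), 2 ^ h * r ^ i :=
        sum_le_sum fun i _ ↦ rieszProd_le_mul_pow hh hz hper hr1.le hblock' i
    _ = 2 ^ h * ((r ^ (L + 1) - 1) / (r - 1)) := by rw [← mul_sum, geom_sum_eq hr1.ne']
    _ ≤ 2 ^ h * (r ^ (L + 1) / (r - 1)) := by gcongr; exact sub_le_self _ zero_le_one
    _ = 2 ^ h * (r / (r - 1)) * r ^ L := by ring
    _ ≤ 2 ^ h * (r / (r - 1)) * ‖(x : ℝ) ^ β‖ := by
        rw [Real.norm_of_nonneg (by positivity)]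
        gcongr

end SeminormedCommRing

lemma prod_rieszProd_primitiveRoot {K : Type*} [NormedField K] {n : ℕ} {ω : K}
    (hω : IsPrimitiveRoot ω (n + 1)) (hodd : Odd (n + 1)) (h : ℕ) :
    ∏ l ∈ range n, rieszProd (ω ^ (l + 1)) h = ‖(n + 1 : K)‖ ^ h := by
  have factor_prod (k : ℕ) : ∏ l ∈ range n, ‖1 - (ω ^ (l + 1)) ^ 2 ^ k‖ = ‖(n + 1 : K)‖ := by
    have hcop : (2 ^ k).Coprime (n + 1) := (Nat.coprime_two_left.2 hodd).pow_left k
    simp only [pow_right_comm _ _ (2 ^ k)]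
    rw [← norm_prod, (hω.pow_of_coprime _ hcop).prod_one_sub_pow_eq_order]
  simp only [rieszProd, prod_comm (s := range n), factor_prod, prod_const, card_range]

/-- The exponent attached to the frequency `l`; `α(m)` is its maximum over `1 ≤ l ≤ m - 1` when `h`
is the order of `2` modulo `m`. -/
noncomputable def blockExponent (m h l : ℕ) : ℝ :=
  1 + (1 / (h * Real.log 2)) *
    ∑ k ∈ range h, Real.log |Real.sin (Real.pi * l * 2 ^ k / m)|

section RootsOfUnity

variable {m : ℕ} [NeZero m]

lemma isPrimitiveRoot_stdAddChar_one : IsPrimitiveRoot (ZMod.stdAddChar (1 : ZMod m)) m := by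
  have hexp := ZMod.stdAddChar_coe (N := m) 1
  rw [Int.cast_one, Int.cast_one, mul_one] at hexp
  exact hexp ▸ Complex.isPrimitiveRoot_exp m (NeZero.ne m)

lemma norm_one_sub_stdAddChar (l : ℕ) :
    ‖1 - ZMod.stdAddChar (l : ZMod m)‖ = 2 * |Real.sin (Real.pi * l / m)| := by
  have hexp : ZMod.stdAddChar (l : ZMod m) =
      Complex.exp (Complex.I * ((2 * (Real.pi * l / m) : ℝ) : ℂ)) := by
    rw [← Int.cast_natCast, ZMod.stdAddChar_coe]
    push_cast
    ring_nf
  rw [hexp, norm_sub_rev, Complex.norm_exp_I_mul_ofReal_sub_one, norm_mul,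
    mul_div_cancel_left₀ _ two_ne_zero, Real.norm_two, Real.norm_eq_abs]

lemma stdAddChar_natCast_pow (l n : ℕ) :
    ZMod.stdAddChar (l : ZMod m) ^ n = ZMod.stdAddChar ((l * n : ℕ) : ZMod m) := by
  rw [← AddChar.map_nsmul_eq_pow, nsmul_eq_mul, Nat.cast_mul, mul_comm]

lemma sin_pi_mul_div_ne_zero {l : ℕ} (hl : ¬ m ∣ l) : Real.sin (Real.pi * l / m) ≠ 0 := by
  intro hsin
  have hone : ZMod.stdAddChar (l : ZMod m) = ZMod.stdAddChar (0 : ZMod m) := by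
    have := norm_one_sub_stdAddChar (m := m) l
    rw [hsin, abs_zero, mul_zero, norm_sub_eq_zero_iff] at this
    rw [← this, AddChar.map_zero_eq_one]
  exact hl ((ZMod.natCast_eq_zero_iff l m).1 (ZMod.injective_stdAddChar hone))

lemma rieszProd_stdAddChar_eq_rpow (hodd : Odd m) {h : ℕ} (hh : h ≠ 0) {l : ℕ} (hl : ¬ m ∣ l) :
    rieszProd (ZMod.stdAddChar (l : ZMod m)) h = 2 ^ (blockExponent m h l * h) := by
  have sin_pos (k : ℕ) : 0 < |Real.sin (Real.pi * l * 2 ^ k / m)| := by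
    have hcop : m.Coprime (2 ^ k) := (Nat.coprime_two_right.2 hodd).pow_right k
    have hndvd : ¬ m ∣ l * 2 ^ k := fun hd ↦ hl (hcop.dvd_of_dvd_mul_right hd)
    simpa [mul_assoc] using sin_pi_mul_div_ne_zero hndvd
  have log_mul_exponent : Real.log 2 * (blockExponent m h l * h) =
      ∑ k ∈ range h, (Real.log 2 + Real.log |Real.sin (Real.pi * l * 2 ^ k / m)|) := by
    rw [sum_add_distrib, sum_const, card_range, nsmul_eq_mul, blockExponent]
    field_simp
  calc rieszProd (ZMod.stdAddChar (l : ZMod m)) h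
      = ∏ k ∈ range h, 2 * |Real.sin (Real.pi * l * 2 ^ k / m)| := by
        simp only [rieszProd, stdAddChar_natCast_pow, norm_one_sub_stdAddChar]
        push_cast
        simp only [mul_assoc]
    _ = ∏ k ∈ range h, Real.exp (Real.log 2 + Real.log |Real.sin (Real.pi * l * 2 ^ k / m)|) := by
        simp only [Real.exp_add, Real.exp_log two_pos, Real.exp_log (sin_pos _)]
    _ = 2 ^ (blockExponent m h l * h) := by
        rw [Real.rpow_def_of_pos two_pos, log_mul_exponent, Real.exp_sum]

lemma rieszProd_stdAddChar_le (hodd : Odd m) {h : ℕ} (hh : h ≠ 0) {β : ℝ}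
    (hβ : ∀ l ∈ Icc 1 (m - 1), blockExponent m h l ≤ β) (l : ZMod m) :
    rieszProd (ZMod.stdAddChar l) h ≤ 2 ^ (β * h) := by
  rcases eq_or_ne l 0 with rfl | hl
  · have : rieszProd (ZMod.stdAddChar (0 : ZMod m)) h = 0 := by simp [rieszProd, hh]
    rw [this]
    positivity
  · have hlt := l.val_lt
    have hpos : 0 < l.val := ZMod.val_pos.2 hl
    rw [← ZMod.natCast_zmod_val l,
      rieszProd_stdAddChar_eq_rpow hodd hh (Nat.not_dvd_of_pos_of_lt hpos hlt)]
    gcongr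
    · exact one_le_two
    · exact hβ _ (mem_Icc.2 ⟨hpos, by omega⟩)

lemma sum_filter_mod_eq_of_isPrimitive {R : Type*} [CommRing R] [IsDomain R]
    {ψ : AddChar (ZMod m) R} (hψ : ψ.IsPrimitive) {a : ℕ} (ha : a < m) (t : Finset ℕ) (f : ℕ → R) :
    m * ∑ n ∈ t with n % m = a, f n =
      ∑ l : ZMod m, ψ (-(l * a)) * ∑ n ∈ t, f n * ψ l ^ n := by
  have orthogonality (n : ℕ) :
      ∑ l : ZMod m, ψ (l * (n - a)) = if n % m = a then (m : R) else 0 := by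
    have : (n : ZMod m) = a ↔ n % m = a := by
      rw [ZMod.natCast_eq_natCast_iff', Nat.mod_eq_of_lt ha]
    simp [AddChar.sum_mulShift _ hψ, sub_eq_zero, this, ZMod.card]
  have mul_char (l : ZMod m) (n : ℕ) : ψ (-(l * a)) * (f n * ψ l ^ n) = f n * ψ (l * (n - a)) := by
    rw [← AddChar.map_nsmul_eq_pow, mul_left_comm, ← AddChar.map_add_eq_mul, nsmul_eq_mul]
    ring_nf
  simp only [mul_sum, mul_char, sum_filter]
  rw [sum_comm]
  refine sum_congr rfl fun n _ ↦ ?_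
  rw [← mul_sum, orthogonality]
  split_ifs <;> simp [mul_comm]

lemma sum_filter_mod_eq_isBigO {a : ℕ} (ha : a < m) {g : ℕ → ℝ}
    (hg : ∀ l : ZMod m, thueMorseSum (ZMod.stdAddChar l : ℂ) =O[atTop] g) :
    (fun x ↦ ∑ n ∈ range x with n % m = a, (-1 : ℝ) ^ s n) =O[atTop] g := by
  have inversion (x : ℕ) : ((∑ n ∈ range x with n % m = a, (-1 : ℝ) ^ s n : ℝ) : ℂ) =
      (m : ℂ)⁻¹ * ∑ l : ZMod m, ZMod.stdAddChar (-(l * a : ZMod m)) *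
        thueMorseSum (ZMod.stdAddChar l : ℂ) x := by
    rw [eq_inv_mul_iff_mul_eq₀ (NeZero.ne _)]
    push_cast
    exact sum_filter_mod_eq_of_isPrimitive (ZMod.isPrimitive_stdAddChar m) ha (range x) _
  rw [← Complex.isBigO_ofReal_left]
  simp only [inversion]
  exact (IsBigO.fun_sum fun l _ ↦ (hg l).const_mul_left _).const_mul_left _

end RootsOfUnity

lemma exists_blockExponent_pos {m : ℕ} (hm : 1 < m) (hodd : Odd m) {h : ℕ} (hh : h ≠ 0) :
    ∃ l ∈ Icc 1 (m - 1), 0 < blockExponent m h l := by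
  obtain ⟨n, rfl⟩ : ∃ n, m = n + 1 := ⟨m - 1, by omega⟩
  have stdAddChar_eq_pow (l : ℕ) :
      ZMod.stdAddChar (1 : ZMod (n + 1)) ^ l = ZMod.stdAddChar (l : ZMod (n + 1)) := by
    simpa using stdAddChar_natCast_pow (m := n + 1) 1 l
  have prod_blocks : 1 < ∏ l ∈ range n,
      rieszProd (ZMod.stdAddChar ((l + 1 : ℕ) : ZMod (n + 1))) h := by
    have hprod := prod_rieszProd_primitiveRoot (isPrimitiveRoot_stdAddChar_one (m := n + 1)) hodd h
    simp only [stdAddChar_eq_pow] at hprod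
    rw [hprod, ← Nat.cast_add_one, Complex.norm_natCast]
    exact one_lt_pow₀ (by exact_mod_cast hm) hh
  obtain ⟨l, hl, one_lt_block⟩ : ∃ l ∈ range n,
      1 < rieszProd (ZMod.stdAddChar ((l + 1 : ℕ) : ZMod (n + 1))) h := by
    by_contra! block_le
    exact prod_blocks.not_ge (prod_le_one (fun _ _ ↦ rieszProd_nonneg _ _) block_le)
  rw [mem_range] at hl
  refine ⟨l + 1, mem_Icc.2 ⟨by omega, by omega⟩, ?_⟩
  rw [rieszProd_stdAddChar_eq_rpow hodd hh (Nat.not_dvd_of_pos_of_lt l.succ_pos (by omega)),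
    Real.one_lt_rpow_iff_of_pos two_pos] at one_lt_block
  have := one_lt_block.resolve_right (by norm_num)
  exact pos_of_mul_pos_left this.2 (Nat.cast_nonneg h)

lemma abs_card_filter_mod_eq_sub_le {m a : ℕ} (ha : a < m) (x : ℕ) :
    |(#{n ∈ range x | n % m = a} : ℝ) - x / m| ≤ 1 := by
  have hm : 0 < m := by omega
  have card_eq : #{n ∈ range x | n % m = a} = x / m + if a < x % m then 1 else 0 := by
    have hcount := Nat.count_modEq_card x hm a
    simp only [Nat.count_eq_card_filter_range, Nat.ModEq, Nat.mod_eq_of_lt ha] at hcount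
    exact hcount
  have floor_le : ((x / m : ℕ) : ℝ) ≤ x / m := Nat.cast_div_le
  have lt_floor : (x : ℝ) / m < (x / m : ℕ) + 1 := by
    rw [← Nat.floor_div_eq_div (K := ℝ)]
    exact Nat.lt_floor_add_one _
  rw [card_eq, abs_le]
  split_ifs <;> push_cast <;> constructor <;> linarith

lemma isBigO_natCast_rpow_of_le {p q : ℝ} (hpq : p ≤ q) :
    (fun x : ℕ ↦ (x : ℝ) ^ p) =O[atTop] fun x : ℕ ↦ (x : ℝ) ^ q := by
  refine .of_norm_eventuallyLE ?_
  filter_upwards [eventually_ge_atTop 1] with x hx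
  rw [Real.norm_of_nonneg (by positivity)]
  exact Real.rpow_le_rpow_of_exponent_le (by exact_mod_cast hx) hpq

lemma T_eq_card_add_signed_sum_div_two (m a x : ℕ) {j : ℕ} (hj : j < 2) :
    (T m a j x : ℝ) =
      (#{n ∈ range x | n % m = a} +
        (-1) ^ j * ∑ n ∈ range x with n % m = a, (-1 : ℝ) ^ s n) / 2 := by
  have indicator (n : ℕ) :
      (if s n % 2 = j then 1 else 0 : ℝ) = (1 + (-1) ^ j * (-1) ^ s n) / 2 := by
    rw [neg_one_pow_eq_pow_mod_two (n := s n)]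
    have := Nat.mod_lt (s n) two_pos
    interval_cases j <;> interval_cases s n % 2 <;> norm_num
  rw [T, ← filter_filter, card_filter, Nat.cast_sum]
  simp only [Nat.cast_ite, Nat.cast_one, Nat.cast_zero, indicator, ← sum_div, sum_add_distrib,
    ← mul_sum, sum_const, nsmul_one]

lemma orderOf_two_ne_zero {m : ℕ} (hodd : Odd m) : orderOf (2 : ZMod m) ≠ 0 := by
  have : NeZero m := ⟨hodd.pos.ne'⟩
  have : IsUnit (2 : ZMod m) := by
    exact_mod_cast (ZMod.isUnit_iff_coprime 2 m).2 (Nat.coprime_two_left.2 hodd)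
  exact (isOfFinOrder_iff_isUnit.2 this).orderOf_pos.ne'

lemma stdAddChar_pow_two_pow_orderOf {m : ℕ} [NeZero m] (l : ZMod m) :
    (ZMod.stdAddChar l : ℂ) ^ 2 ^ orderOf (2 : ZMod m) = ZMod.stdAddChar l := by
  rw [← AddChar.map_nsmul_eq_pow, nsmul_eq_mul, Nat.cast_pow, Nat.cast_ofNat, pow_orderOf_eq_one,
    one_mul]

theorem gelfond_exact_exponent_upper_general
    (m : ℕ) (hodd : Odd m) (a : ℕ) (ha : a < m) (j : ℕ) (hj : j < 2)
    (h : ℕ) (hh : h = orderOf (2 : ZMod m)) (α : ℝ)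
    (hα : IsGreatest { y : ℝ | ∃ l ∈ Icc 1 (m - 1),
      y = 1 + (1 / (h * Real.log 2)) *
        ∑ k ∈ range h, Real.log |Real.sin (Real.pi * l * 2 ^ k / m)| } α) :
    (fun x : ℕ ↦ (T m a j x : ℝ) - x / (2 * m)) =O[atTop] fun x : ℕ ↦ (x : ℝ) ^ α := by
  have : NeZero m := ⟨by omega⟩
  have hm : 1 < m := by
    obtain ⟨l, hl, -⟩ := hα.1
    have := mem_Icc.1 hl
    omega
  have exponent_le : ∀ l ∈ Icc 1 (m - 1), blockExponent m h l ≤ α := fun l hl ↦ hα.2 ⟨l, hl, rfl⟩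
  have hh0 : h ≠ 0 := hh ▸ orderOf_two_ne_zero hodd
  have hα0 : 0 < α := by
    obtain ⟨l, hl, hpos⟩ := exists_blockExponent_pos hm hodd hh0
    exact hpos.trans_le (exponent_le l hl)
  have signed_isBigO := sum_filter_mod_eq_isBigO ha fun l ↦
    thueMorseSum_isBigO_rpow hh0 (ZMod.stdAddChar.norm_apply l).le
      (hh ▸ stdAddChar_pow_two_pow_orderOf l) hα0 (rieszProd_stdAddChar_le hodd hh0 exponent_le l)
  have count_isBigO : (fun x : ℕ ↦ (#{n ∈ range x | n % m = a} : ℝ) - x / m) =O[atTop]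
      fun x : ℕ ↦ (x : ℝ) ^ α := by
    refine IsBigO.trans (.of_norm_le fun x ↦ ?_) (isBigO_natCast_rpow_of_le hα0.le)
    simpa using abs_card_filter_mod_eq_sub_le ha x
  refine ((count_isBigO.add (signed_isBigO.const_mul_left ((-1) ^ j))).const_mul_left
    (1 / 2)).congr_left fun x ↦ ?_
  rw [T_eq_card_add_signed_sum_div_two m a x hj]
  ring

/-- Upper-bound half of Theorem 1 (Gelfond/Shevelev, exact exponent): for odd `m ≥ 3`,
`T_{m,a}^{(j)}(x) = x/(2m) + O(x^{α+ε})` for every `ε > 0`, where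
`α = max_{1 ≤ l ≤ m-1} (1 + (1/(h ln 2)) Σ_{k<h} ln |sin (π l 2^k / m)|)` and
`h` is the multiplicative order of `2` mod `m`. -/
theorem gelfond_exact_exponent_upper
    (m : ℕ) (hm : 3 ≤ m) (hodd : Odd m)
    (a : ℕ) (ha : a < m) (j : ℕ) (hj : j < 2)
    (h : ℕ) (hh : h = orderOf (2 : ZMod m))
    (α : ℝ)
    (hα : IsGreatest { y : ℝ | ∃ l ∈ Finset.Icc 1 (m - 1),
      y = 1 + (1 / (h * Real.log 2)) *
        ∑ k ∈ Finset.range h, Real.log |Real.sin (Real.pi * l * 2 ^ k / m)| } α)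
    (ε : ℝ) (hε : 0 < ε) :
    (fun x : ℕ => (T m a j x : ℝ) - x / (2 * m))
      =O[Filter.atTop] fun x : ℕ => (x : ℝ) ^ (α + ε) :=
  (gelfond_exact_exponent_upper_general m hodd a ha j hj h hh α hα).trans
    (isBigO_natCast_rpow_of_le (le_add_of_nonneg_right hε.le))
end

section
/- Let m > 1 be an even integer, a ∈ {0,1,…,m−1}, and x a natural number. Then S_{m,a}(2x) = (−1)^a · S_{m/2, ⌊a/2⌋}(x). -/
/-- Newman-like sum `S_{m,a}(x) = Σ_{0 ≤ n < x, n ≡ a (mod m)} (−1)^{s(n)}`. -/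
def S (m a x : ℕ) : ℤ :=
  ∑ n ∈ (Finset.range x).filter (fun n => n % m = a), (-1 : ℤ) ^ (s n)

/-!
An even modulus sees the last binary digit: `n = 2j + d` with `d ∈ {0, 1}` satisfies
`n ≡ a (mod 2k)` exactly when `d` is the parity of `a` and `j ≡ ⌊a/2⌋ (mod k)`. So the sum runs over
the numbers `2j + d` for this one value of `d`, and `s (2j + d) = s j + d` makes each of its terms
differ from the corresponding term for `j` by the sign `(-1)^d = (-1)^a`.
-/

lemma sum_digits_mul_add {b d : ℕ} (hb : 1 < b) (hd : d < b) (n : ℕ) :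
    (Nat.digits b (b * n + d)).sum = (Nat.digits b n).sum + d := by
  by_cases hzero : d = 0 ∧ n = 0
  · simp [hzero]
  · have hne : d ≠ 0 ∨ n ≠ 0 := not_and_or.mp hzero
    rw [add_comm, Nat.digits_add b hb d n hd hne, List.sum_cons, add_comm]

lemma s_two_mul_add {d : ℕ} (hd : d < 2) (n : ℕ) : s (2 * n + d) = s n + d :=
  sum_digits_mul_add one_lt_two hd n

lemma neg_one_pow_s_two_mul_add_mod (a n : ℕ) :
    (-1 : ℤ) ^ s (2 * n + a % 2) = (-1) ^ a * (-1) ^ s n := by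
  rw [s_two_mul_add (Nat.mod_lt a two_pos), pow_add, ← neg_one_pow_eq_pow_mod_two, mul_comm]

lemma mod_mul_eq_iff (n b k a : ℕ) : n % (b * k) = a ↔ n % b = a % b ∧ n / b % k = a / b := by
  constructor
  · rintro rfl
    exact ⟨(Nat.mod_mul_right_mod n b k).symm, (Nat.mod_mul_right_div_self n b k).symm⟩
  · rintro ⟨hmod, hdiv⟩
    rw [Nat.mod_mul, hmod, hdiv, Nat.mod_add_div]

lemma sum_filter_mod_mul_range_mul {M : Type*} [AddCommMonoid M] {b : ℕ} (hb : 0 < b)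
    (k a x : ℕ) (f : ℕ → M) :
    ∑ n ∈ Finset.range (b * x) with n % (b * k) = a, f n =
      ∑ j ∈ Finset.range x with j % k = a / b, f (b * j + a % b) := by
  have hdiv (j : ℕ) : (b * j + a % b) / b = j := by
    rw [Nat.mul_add_div hb, Nat.div_eq_of_lt (Nat.mod_lt a hb), add_zero]
  have hmod (j : ℕ) : (b * j + a % b) % b = a % b := by
    rw [Nat.mul_add_mod, Nat.mod_mod]
  have hrecover {n : ℕ} (hn : n % b = a % b) : b * (n / b) + a % b = n := by
    rw [← hn, Nat.div_add_mod]
  refine Finset.sum_nbij' (· / b) (b * · + a % b) ?_ ?_ ?_ ?_ ?_ <;>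
    simp only [Finset.mem_filter, Finset.mem_range, mod_mul_eq_iff, and_imp]
  · exact fun n hlt _ hres => ⟨Nat.div_lt_of_lt_mul hlt, hres⟩
  · intro j hlt hres
    refine ⟨?_, hmod j, (hdiv j).symm ▸ hres⟩
    rwa [mul_comm b x, ← Nat.div_lt_iff_lt_mul hb, hdiv]
  · exact fun n _ hn _ => hrecover hn
  · exact fun j _ _ => hdiv j
  · exact fun n _ hn _ => congrArg f (hrecover hn).symm

/-- Formula (5): for even `m > 1` and `a < m`,
`S_{m,a}(2x) = (−1)^a S_{m/2, ⌊a/2⌋}(x)`. -/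
theorem S_even_modulus_reduction (m : ℕ) (hm : 1 < m) (heven : Even m)
    (a : ℕ) (ha : a < m) (x : ℕ) :
    S m a (2 * x) = (-1 : ℤ) ^ a * S (m / 2) (a / 2) x := by
  obtain ⟨k, rfl⟩ := heven.two_dvd
  rw [Nat.mul_div_cancel_left k two_pos]
  calc
    S (2 * k) a (2 * x)
      = ∑ j ∈ Finset.range x with j % k = a / 2, (-1 : ℤ) ^ s (2 * j + a % 2) :=
        sum_filter_mod_mul_range_mul two_pos k a x fun n => (-1 : ℤ) ^ s n
    _ = (-1) ^ a * S k (a / 2) x := by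
        simp only [neg_one_pow_s_two_mul_add_mod, ← Finset.mul_sum, S]
end

section
/- Let p be an odd prime for which 2 is a semiprimitive root modulo p, i.e., 2 has multiplicative order (p−1)/2 modulo p and there is no natural number x with 2^x ≡ −1 (mod p). Then Π_{k=0}^{(p−3)/2} |sin(π·2^k / p)| = √p / 2^{(p−1)/2}. -/
/-!
The factor `2 |sin (π j / n)|` is `‖1 - ψ j‖`, where `ψ` is the standard additive character of
`ZMod n`, so it depends only on `j` modulo `n` and up to sign. The powers of a semiprimitive root
contain exactly one residue from each pair `±a` of nonzero residues, so the square of the product of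
these factors is `∏_{a ≠ 0} ‖1 - ψ a‖ = n`, the value at `1` of `(X ^ n - 1) / (X - 1)`.
-/

lemma injOn_pow_range_orderOf {M : Type*} [Monoid M] (x : M) :
    Set.InjOn (x ^ ·) (Finset.range (orderOf x) : Set ℕ) := by
  simpa only [Finset.coe_range] using pow_injOn_Iio_orderOf

section HalfSystem

open scoped Pointwise

/-- A half system is a set of representatives of the nonzero elements modulo sign, as in Gauss's
lemma on quadratic residues. Disjointness from the negatives rules out nonzero `a` with
`a = -a`. -/
structure IsHalfSystem {G : Type*} [Zero G] [Neg G] [Fintype G] [DecidableEq G]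
    (S : Finset G) : Prop where
  disjoint_neg : Disjoint S (-S)
  union_neg : S ∪ -S = {0}ᶜ

lemma IsHalfSystem.prod_sq_of_even {G M : Type*} [Zero G] [InvolutiveNeg G] [Fintype G]
    [DecidableEq G] [CommMonoid M] {S : Finset G} (hS : IsHalfSystem S) {f : G → M}
    (hf : Function.Even f) : (∏ a ∈ S, f a) ^ 2 = ∏ a ∈ ({0}ᶜ : Finset G), f a := by
  have prod_neg : ∏ a ∈ -S, f a = ∏ a ∈ S, f a := by
    rw [Finset.prod_neg_index]
    exact Finset.prod_congr rfl fun a _ => hf a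
  rw [← hS.union_neg, Finset.prod_union hS.disjoint_neg, prod_neg, sq]

lemma disjoint_neg_image_pow_range_orderOf {M : Type*} [Monoid M] [HasDistribNeg M]
    [DecidableEq M] {g : M} (hneg : ¬ ∃ x : ℕ, g ^ x = -1) :
    Disjoint ((Finset.range (orderOf g)).image (g ^ ·))
      (-(Finset.range (orderOf g)).image (g ^ ·)) := by
  rw [Finset.disjoint_left]
  intro a ha hna
  obtain ⟨k, -, rfl⟩ := Finset.mem_image.1 ha
  obtain ⟨l, hl, hlk⟩ := Finset.mem_image.1 (Finset.mem_neg'.1 hna)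
  have hl : l ≤ orderOf g := (Finset.mem_range.1 hl).le
  refine hneg ⟨k + (orderOf g - l), ?_⟩
  rw [pow_add, ← neg_eq_iff_eq_neg.2 hlk, neg_mul, ← pow_add, Nat.add_sub_cancel' hl,
    pow_orderOf_eq_one]

lemma isHalfSystem_image_pow_range_orderOf {R : Type*} [Ring R] [Fintype R] [DecidableEq R] {g : R}
    (hcard : Fintype.card R = 2 * orderOf g + 1) (hneg : ¬ ∃ x : ℕ, g ^ x = -1) :
    IsHalfSystem ((Finset.range (orderOf g)).image (g ^ ·)) := by
  have : Nontrivial R := nontrivial_of_ne (g ^ 0) (-1) fun h => hneg ⟨0, h⟩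
  have hpos : 0 < orderOf g := by
    have := Fintype.one_lt_card (α := R)
    lia
  have hne (k : ℕ) : g ^ k ≠ 0 := ((orderOf_pos_iff.1 hpos).isUnit.pow k).ne_zero
  have hdisj := disjoint_neg_image_pow_range_orderOf hneg
  refine ⟨hdisj, Finset.eq_of_subset_of_card_le ?subset ?card⟩
  case subset =>
    intro a ha
    simp only [Finset.mem_union, Finset.mem_neg', Finset.mem_image] at ha
    rw [Finset.mem_compl, Finset.mem_singleton]
    rcases ha with ⟨k, -, rfl⟩ | ⟨k, -, hk⟩
    · exact hne k
    · exact neg_ne_zero.1 (hk ▸ hne k)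
  case card =>
    rw [Finset.card_union_of_disjoint hdisj, Finset.card_neg,
      Finset.card_image_of_injOn (injOn_pow_range_orderOf g), Finset.card_range,
      Finset.card_compl, Finset.card_singleton, hcard]
    lia

end HalfSystem

lemma prod_compl_zero_one_sub_pow_val {R : Type*} [CommRing R] [IsDomain R] {n : ℕ}
    [NeZero n] {ζ : R} (hζ : IsPrimitiveRoot ζ n) :
    ∏ a ∈ ({0}ᶜ : Finset (ZMod n)), (1 - ζ ^ a.val) = n := by
  obtain ⟨m, rfl⟩ := Nat.exists_eq_succ_of_ne_zero (NeZero.ne n)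
  have key : ∏ a ∈ ({0}ᶜ : Finset (Fin (m + 1))), (1 - ζ ^ a.val) = m + 1 := by
    rw [← Fin.image_succ_univ, Finset.prod_image (Fin.succ_injective m).injOn,
      ← hζ.prod_one_sub_pow_eq_order, Finset.prod_range]
    simp only [Fin.val_succ]
  rw [Nat.cast_succ]
  exact key

section StdAddChar

variable {n : ℕ} [NeZero n]

lemma stdAddChar_eq_pow_val (a : ZMod n) :
    ZMod.stdAddChar a = Complex.exp (2 * Real.pi * Complex.I / n) ^ a.val := by
  rw [ZMod.stdAddChar_apply, ZMod.toCircle_apply, ← Complex.exp_nat_mul]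
  congr 1
  ring

lemma even_norm_one_sub_stdAddChar :
    Function.Even fun a : ZMod n => ‖1 - ZMod.stdAddChar a‖ := by
  intro a
  dsimp only
  rw [AddChar.map_neg_eq_conj, ← Complex.norm_conj, map_sub, map_one, Complex.conj_conj]

lemma norm_one_sub_stdAddChar_intCast (j : ℤ) :
    ‖1 - ZMod.stdAddChar (j : ZMod n)‖ = 2 * |Real.sin (Real.pi * j / n)| := by
  have hexp : ZMod.stdAddChar (j : ZMod n) =
      Complex.exp (Complex.I * (2 * (Real.pi * j / n) : ℝ)) := by
    rw [ZMod.stdAddChar_coe]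
    congr 1
    push_cast
    ring
  rw [hexp, norm_sub_rev, Complex.norm_exp_I_mul_ofReal_sub_one, norm_mul, Real.norm_two,
    Real.norm_eq_abs, mul_div_cancel_left₀ _ (two_ne_zero' ℝ)]

lemma prod_compl_zero_norm_one_sub_stdAddChar :
    ∏ a ∈ ({0}ᶜ : Finset (ZMod n)), ‖1 - ZMod.stdAddChar a‖ = n := by
  have hζ := Complex.isPrimitiveRoot_exp n (NeZero.ne n)
  simp only [stdAddChar_eq_pow_val]
  rw [← norm_prod, prod_compl_zero_one_sub_pow_val hζ, Complex.norm_natCast]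

lemma IsHalfSystem.prod_norm_one_sub_stdAddChar {S : Finset (ZMod n)} (hS : IsHalfSystem S) :
    ∏ a ∈ S, ‖1 - ZMod.stdAddChar a‖ = √n := by
  rw [eq_comm, Real.sqrt_eq_iff_eq_sq (by positivity) (by positivity),
    hS.prod_sq_of_even even_norm_one_sub_stdAddChar, prod_compl_zero_norm_one_sub_stdAddChar]

end StdAddChar

theorem prod_abs_sin_two_pow_semiprimitive_general {n : ℕ} (hodd : Odd n) {g : ℤ}
    (hord : orderOf (g : ZMod n) = (n - 1) / 2) (hneg : ¬ ∃ x : ℕ, (g : ZMod n) ^ x = -1) :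
    ∏ k ∈ Finset.range ((n - 1) / 2), |Real.sin (Real.pi * g ^ k / n)| =
      √n / 2 ^ ((n - 1) / 2) := by
  have : NeZero n := ⟨hodd.pos.ne'⟩
  have hcard : Fintype.card (ZMod n) = 2 * orderOf (g : ZMod n) + 1 := by
    rw [ZMod.card, hord]
    grind
  have hS := isHalfSystem_image_pow_range_orderOf hcard hneg
  have hfactor (k : ℕ) : ‖1 - ZMod.stdAddChar ((g : ZMod n) ^ k)‖ =
      2 * |Real.sin (Real.pi * g ^ k / n)| := by
    exact_mod_cast norm_one_sub_stdAddChar_intCast (n := n) (g ^ k)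
  have hprod := hS.prod_norm_one_sub_stdAddChar
  rw [Finset.prod_image (injOn_pow_range_orderOf _), hord] at hprod
  simp only [hfactor, Finset.prod_mul_distrib, Finset.prod_const, Finset.card_range] at hprod
  rw [← hprod, mul_div_cancel_left₀ _ (by positivity)]

/-- If `p` is an odd prime for which `2` is a semiprimitive root (order `(p−1)/2`
and `2^x ≡ −1 (mod p)` unsolvable), then
`Π_{k=0}^{(p−3)/2} |sin(π 2^k / p)| = √p / 2^{(p−1)/2}`. -/
theorem prod_abs_sin_two_pow_semiprimitive (p : ℕ) (hp : p.Prime) (hodd : Odd p)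
    (hord : orderOf (2 : ZMod p) = (p - 1) / 2)
    (hneg : ¬ ∃ x : ℕ, (2 : ZMod p) ^ x = -1) :
    ∏ k ∈ Finset.range ((p - 1) / 2), |Real.sin (Real.pi * 2 ^ k / p)| =
      Real.sqrt p / 2 ^ ((p - 1) / 2) := by
  exact_mod_cast prod_abs_sin_two_pow_semiprimitive_general hodd (g := 2)
    (by exact_mod_cast hord) (by exact_mod_cast hneg)
end

section
/- One has S_{17,0}(x) = O(x^{α}) as x → ∞, where α = ln(17 + 4√17) / ln 256 = 0.633220353…. -/
open Finset Filter Asymptotics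

section Growth

variable {b : ℕ} {c : ℝ}

lemma le_mul_rpow_logb_of_le_mul {g : ℕ → ℝ} (hb : 1 < b) (hc : 1 < c)
    (hg : ∀ q, ∀ r < b, g (b * q + r) ≤ c * g q) {x : ℕ} (hx : x ≠ 0) :
    g x ≤ c * g 0 * (x : ℝ) ^ Real.logb b c := by
  have one_lt_b : (1 : ℝ) < b := mod_cast hb
  have c_pos : 0 < c := zero_lt_one.trans hc
  have exponent_pos : 0 < Real.logb b c := Real.logb_pos one_lt_b hc
  have g_zero_nonneg : 0 ≤ g 0 := by
    have := hg 0 0 (by omega)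
    rw [mul_zero, zero_add] at this
    nlinarith
  induction x using Nat.strong_induction_on with
  | _ x ih =>
    have digit_lt : x % b < b := Nat.mod_lt x (by omega)
    have step : g x ≤ c * g (x / b) := by
      simpa only [Nat.div_add_mod] using hg (x / b) (x % b) digit_lt
    by_cases hq : x / b = 0
    · have one_le : (1 : ℝ) ≤ (x : ℝ) ^ Real.logb b c :=
        Real.one_le_rpow (mod_cast Nat.one_le_iff_ne_zero.2 hx) exponent_pos.le
      rw [hq] at step
      exact step.trans (le_mul_of_one_le_right (by positivity) one_le)
    · calc g x ≤ c * g (x / b) := step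
        _ ≤ c * (c * g 0 * ((x / b : ℕ) : ℝ) ^ Real.logb b c) := by
          gcongr
          exact ih _ (Nat.div_lt_self (by omega) hb) hq
        _ = c * g 0 * ((b : ℝ) * (x / b : ℕ)) ^ Real.logb b c := by
          rw [Real.mul_rpow (by positivity) (by positivity),
            Real.rpow_logb (by positivity) one_lt_b.ne' c_pos]
          ring
        _ ≤ c * g 0 * (x : ℝ) ^ Real.logb b c := by
          gcongr
          exact_mod_cast Nat.mul_div_le x b

lemma isBigO_rpow_logb_of_norm_le {E : Type*} [SeminormedAddGroup E] {f : ℕ → E} {d : ℝ}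
    (hb : 1 < b) (hc : 1 < c) (hf : ∀ q, ∀ r < b, ‖f (b * q + r)‖ ≤ c * ‖f q‖ + d) :
    f =O[atTop] fun x : ℕ => (x : ℝ) ^ Real.logb b c := by
  have c_sub_one_pos : 0 < c - 1 := sub_pos.2 hc
  -- `K` is chosen so that `c * K = |d| + K`: shifting by it absorbs the error term.
  set K : ℝ := |d| / (c - 1)
  have K_nonneg : 0 ≤ K := by positivity
  have K_mul : K * (c - 1) = |d| := div_mul_cancel₀ _ c_sub_one_pos.ne'
  have shifted : ∀ q, ∀ r < b, ‖f (b * q + r)‖ + K ≤ c * (‖f q‖ + K) := fun q r hr => by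
    linarith [hf q r hr, le_abs_self d]
  refine IsBigO.of_bound (c * (‖f 0‖ + K)) ?_
  filter_upwards [eventually_ne_atTop 0] with x hx
  rw [Real.norm_of_nonneg (by positivity)]
  linarith [le_mul_rpow_logb_of_le_mul (g := fun n => ‖f n‖ + K) hb hc shifted hx]

end Growth

lemma thueMorseSum_two_pow_mul {R : Type*} [CommRing R] (z : R) (k x : ℕ) :
    thueMorseSum z (2 ^ k * x) = thueMorseSum z (2 ^ k) * thueMorseSum (z ^ 2 ^ k) x := by
  induction k generalizing z with
  | zero => simp [thueMorseSum, s]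
  | succ k ih =>
    rw [pow_succ', mul_assoc, thueMorseSum_two_mul, thueMorseSum_two_mul, ih, ← pow_mul, mul_assoc]

section Norm

variable {R : Type*} [SeminormedCommRing R] [NormOneClass R] {z : R}

lemma norm_thueMorseSum_add_sub_le (hz : ‖z‖ ≤ 1) (x r : ℕ) :
    ‖thueMorseSum z (x + r) - thueMorseSum z x‖ ≤ r := by
  have norm_term_le (n : ℕ) : ‖(-1) ^ s n * z ^ n‖ ≤ 1 := by
    have : ‖z ^ n‖ ≤ 1 := (norm_pow_le z n).trans (pow_le_one₀ (norm_nonneg z) hz)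
    rcases neg_one_pow_eq_or R (s n) with h | h <;> simpa [h]
  rw [thueMorseSum, thueMorseSum, sum_range_add, add_sub_cancel_left]
  simpa using norm_sum_le_of_le (range r) fun i _ => norm_term_le (x + i)

lemma isBigO_thueMorseSum {k : ℕ} {c : ℝ} (hz : ‖z‖ ≤ 1) (hk : k ≠ 0) (hzk : z ^ 2 ^ k = z)
    (hc : 1 < c) (hT : ‖thueMorseSum z (2 ^ k)‖ ≤ c) :
    thueMorseSum z =O[atTop] fun x : ℕ => (x : ℝ) ^ Real.logb ((2 ^ k : ℕ) : ℝ) c := by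
  refine isBigO_rpow_logb_of_norm_le (d := (2 ^ k : ℕ)) (Nat.one_lt_two_pow hk) hc
    fun q r hr => ?_
  calc ‖thueMorseSum z (2 ^ k * q + r)‖
      ≤ ‖thueMorseSum z (2 ^ k * q)‖
          + ‖thueMorseSum z (2 ^ k * q + r) - thueMorseSum z (2 ^ k * q)‖ :=
        norm_le_norm_add_norm_sub' _ _
    _ ≤ ‖thueMorseSum z (2 ^ k)‖ * ‖thueMorseSum z q‖ + r := by
        gcongr
        · rw [thueMorseSum_two_pow_mul, hzk]
          exact norm_mul_le _ _
        · exact norm_thueMorseSum_add_sub_le hz _ _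
    _ ≤ c * ‖thueMorseSum z q‖ + (2 ^ k : ℕ) := by gcongr

end Norm

section Fourier

variable {m : ℕ} [NeZero m]

lemma S_val_eq_sum (a : ZMod m) (x : ℕ) :
    S m a.val x = ∑ n ∈ range x with ((n : ℕ) : ZMod m) = a, (-1) ^ s n := by
  simp only [S, ← ZMod.val_natCast, (ZMod.val_injective m).eq_iff]

lemma thueMorseSum_addChar {R : Type*} [CommRing R] (ψ : AddChar (ZMod m) R) (x : ℕ) :
    thueMorseSum (ψ 1) x = ∑ a, (S m a.val x : R) * ψ a := by
  have pow_eq (n : ℕ) : ψ 1 ^ n = ψ n := by rw [← ψ.map_nsmul_eq_pow, nsmul_one]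
  simp only [thueMorseSum, pow_eq, S_val_eq_sum, Int.cast_sum, Int.cast_pow, Int.cast_neg,
    Int.cast_one, sum_mul]
  rw [← sum_fiberwise (range x) (fun n : ℕ => (n : ZMod m))]
  refine sum_congr rfl fun a _ => sum_congr rfl fun n hn => ?_
  rw [(mem_filter.1 hn).2]

lemma mul_S_val_eq_sum_addChar (a : ZMod m) (x : ℕ) :
    (m : ℂ) * S m a.val x = ∑ ψ : AddChar (ZMod m) ℂ, ψ (-a) * thueMorseSum (ψ 1) x := by
  have orthogonality (b : ZMod m) :
      ∑ ψ : AddChar (ZMod m) ℂ, ψ (-a) * ψ b = if b = a then (m : ℂ) else 0 := by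
    simp only [← AddChar.map_add_eq_mul, AddChar.sum_apply_eq_ite, neg_add_eq_zero, ZMod.card,
      eq_comm]
  calc (m : ℂ) * S m a.val x
      = ∑ b, (S m b.val x : ℂ) * ∑ ψ : AddChar (ZMod m) ℂ, ψ (-a) * ψ b := by
        simp only [orthogonality, mul_ite, mul_zero, sum_ite_eq', mem_univ, if_true]
        exact mul_comm _ _
    _ = ∑ ψ : AddChar (ZMod m) ℂ, ψ (-a) * thueMorseSum (ψ 1) x := by
        simp only [thueMorseSum_addChar, mul_sum]
        rw [sum_comm]
        simp only [mul_left_comm]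

lemma isBigO_S_val {k : ℕ} {c : ℝ} (hk : k ≠ 0) (hmk : (2 : ZMod m) ^ k = 1) (hc : 1 < c)
    (hT : ∀ ψ : AddChar (ZMod m) ℂ, ‖thueMorseSum (ψ 1) (2 ^ k)‖ ≤ c) (a : ZMod m) :
    (fun x => (S m a.val x : ℝ)) =O[atTop]
      fun x : ℕ => (x : ℝ) ^ Real.logb ((2 ^ k : ℕ) : ℝ) c := by
  have periodic (ψ : AddChar (ZMod m) ℂ) : ψ 1 ^ 2 ^ k = ψ 1 := by
    rw [← ψ.map_nsmul_eq_pow, nsmul_one, Nat.cast_pow, Nat.cast_ofNat, hmk]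
  have scaled : (fun x => (m : ℂ) * S m a.val x) =O[atTop]
      fun x : ℕ => (x : ℝ) ^ Real.logb ((2 ^ k : ℕ) : ℝ) c := by
    simp only [mul_S_val_eq_sum_addChar]
    exact IsBigO.fun_sum fun ψ _ =>
      (isBigO_thueMorseSum (ψ.norm_apply 1).le hk (periodic ψ) hc (hT ψ)).const_mul_left _
  have unscaled := (isBigO_const_mul_left_iff (Nat.cast_ne_zero.2 (NeZero.ne m))).1 scaled
  exact Complex.isBigO_ofReal_left.1 (by simpa only [Complex.ofReal_intCast] using unscaled)

end Fourier

lemma norm_gaussSum {F : Type*} [Field F] [Fintype F] {χ : MulChar F ℂ} (hχ : χ ≠ 1)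
    {ψ : AddChar F ℂ} (hψ : ψ ≠ 1) : ‖gaussSum χ ψ‖ = √(Fintype.card F) := by
  have norm_sq : (‖gaussSum χ ψ‖ : ℂ) ^ 2 = Fintype.card F := by
    rw [← Complex.mul_conj', starRingEnd_apply, star_gaussSum_eq,
      gaussSum_mul_gaussSum_eq_card hχ (AddChar.IsPrimitive.of_ne_one hψ)]
  rw [eq_comm, Real.sqrt_eq_iff_eq_sq (Nat.cast_nonneg _) (norm_nonneg _)]
  exact_mod_cast norm_sq.symm

instance fact_prime_seventeen : Fact (Nat.Prime 17) := ⟨by norm_num⟩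

lemma S_seventeen_val_256 (a : ZMod 17) :
    S 17 a.val 256 = (if a = 0 then 17 else 0) - 1 - 4 * quadraticChar (ZMod 17) a := by
  revert a
  decide +kernel

lemma thueMorseSum_seventeen_256 {R : Type*} [CommRing R] (ψ : AddChar (ZMod 17) R) :
    thueMorseSum (ψ 1) 256 = 17 - ∑ a, ψ a
      - 4 * gaussSum ((quadraticChar (ZMod 17)).ringHomComp (Int.castRingHom R)) ψ := by
  rw [thueMorseSum_addChar, gaussSum, mul_sum]
  simp only [S_seventeen_val_256, Int.cast_sub, Int.cast_mul, Int.cast_ite, Int.cast_ofNat,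
    Int.cast_one, Int.cast_zero, sub_mul, ite_mul, zero_mul, one_mul, sum_sub_distrib, sum_ite_eq',
    mem_univ, if_true, AddChar.map_zero_eq_one, mul_one, mul_assoc, MulChar.ringHomComp_apply,
    eq_intCast]

lemma norm_thueMorseSum_seventeen_256_le (ψ : AddChar (ZMod 17) ℂ) :
    ‖thueMorseSum (ψ 1) 256‖ ≤ 17 + 4 * √17 := by
  set χ := (quadraticChar (ZMod 17)).ringHomComp (Int.castRingHom ℂ)
  have χ_ne_one : χ ≠ 1 :=
    (MulChar.ringHomComp_ne_one_iff Int.cast_injective).2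
      (quadraticChar_ne_one (by rw [ZMod.ringChar_zmod_n]; decide))
  rw [thueMorseSum_seventeen_256]
  rcases eq_or_ne ψ 1 with rfl | hψ
  · have vanishes : (17 : ℂ) - ∑ a, (1 : AddChar (ZMod 17) ℂ) a - 4 * gaussSum χ 1 = 0 := by
      rw [AddChar.sum_eq_card_of_eq_one rfl, gaussSum_one_right χ_ne_one, ZMod.card]
      norm_num
    rw [vanishes, norm_zero]
    positivity
  · rw [AddChar.sum_eq_zero_of_ne_one hψ, sub_zero]
    calc ‖17 - 4 * gaussSum χ ψ‖ ≤ ‖(17 : ℂ)‖ + ‖4 * gaussSum χ ψ‖ := norm_sub_le _ _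
      _ = 17 + 4 * √17 := by
        rw [norm_mul, norm_gaussSum χ_ne_one hψ, ZMod.card, Complex.norm_ofNat,
          Complex.norm_ofNat, Nat.cast_ofNat]

theorem S_seventeen_bigO_general {a : ℕ} (ha : a < 17) :
    (fun x : ℕ => (S 17 a x : ℝ)) =O[atTop]
      fun x : ℕ => (x : ℝ) ^ (Real.log (17 + 4 * √17) / Real.log 256) := by
  have one_lt : 1 < 17 + 4 * √17 := by linarith [Real.sqrt_nonneg 17]
  have bigO := isBigO_S_val (m := 17) (k := 8) (by decide) (by decide) one_lt
    norm_thueMorseSum_seventeen_256_le (a : ZMod 17)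
  simpa only [ZMod.val_cast_of_lt ha, Nat.reducePow, Nat.cast_ofNat, Real.logb] using bigO

/-- Formula (37): `S_{17,0}(x) = O(x^α)` with `α = ln(17 + 4√17)/ln 256`. -/
theorem S_seventeen_bigO :
    (fun x : ℕ => (S 17 0 x : ℝ)) =O[Filter.atTop]
      fun x : ℕ =>
        (x : ℝ) ^ (Real.log (17 + 4 * Real.sqrt 17) / Real.log 256) :=
  S_seventeen_bigO_general (by decide)
end
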